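/- Let (x_i) be a normalized weakly null Schauder basis for a Banach space X such that ℓ1 does not embed into X and whenever (y_i) is a normalized weakly null block basis of (x_i) having a spreading model (e_i), then ‖e_1 − e_2‖ = 1. Let 𝓕 be a thin family of finite subsets of ℕ which is large in ℕ. Assume that (x_{E_i})_{i≥1} is weakly null for every sequence E_1 < E_2 < … of members of 𝓕, and that limsup_{n→∞} sup{‖x_E‖ : E ∈ 𝓕, n ≤ min E} = 1. Then there exists an infinite set N = (n_1 < n_2 < …) ⊆ ℕ such that the family 𝓖 = {E_1 ∪ … ∪ E_k : k ∈ ℕ, E_1 < … < E_k, each E_i ∈ 𝓕 with E_i ⊆ N, and min E_1 = n_k} is thin and large in N, and moreover limsup_{n→∞} sup{‖x_E‖ : E ∈ 𝓖, n ≤ min E} = 1. -/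

import Mathlib

open Filter Finset Topology NormedSpace
open scoped NNReal

/-- `e` is a Schauder basis of `X`: every vector has a unique expansion whose partial
sums converge in norm. -/
def IsSchauderBasis {X : Type} [NormedAddCommGroup X] [NormedSpace ℝ X] (e : ℕ → X) : Prop :=
  ∀ x : X, ∃! a : ℕ → ℝ,
    Tendsto (fun n => ∑ i ∈ Finset.range n, a i • e i) atTop (𝓝 x)

/-- A sequence is weakly null if it tends to `0` in the weak topology. -/
def WeaklyNull {X : Type} [NormedAddCommGroup X] [NormedSpace ℝ X] (z : ℕ → X) : Prop :=
  ∀ f : X →L[ℝ] ℝ, Tendsto (fun n => f (z n)) atTop (𝓝 (0 : ℝ))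

/-- `x` is a block basis of `e`: each `x j` is a nonzero vector finitely supported on an
interval of indices, with successive supports strictly increasing. -/
def IsBlockBasis {X : Type} [NormedAddCommGroup X] [NormedSpace ℝ X]
    (e : ℕ → X) (x : ℕ → X) : Prop :=
  ∃ (a : ℕ → ℕ → ℝ) (p q : ℕ → ℕ),
    (∀ j, x j = ∑ i ∈ Finset.Icc (p j) (q j), a j i • e i) ∧
    (∀ j, x j ≠ 0) ∧ (∀ j, p j ≤ q j) ∧ (∀ j, q j < p (j + 1))

/-- `Z` embeds (isomorphically) into `W`. -/
def Embeds (Z W : Type) [NormedAddCommGroup Z] [NormedSpace ℝ Z]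
    [NormedAddCommGroup W] [NormedSpace ℝ W] : Prop :=
  ∃ (T : Z →ₗ[ℝ] W) (c C : ℝ), 0 < c ∧ 0 < C ∧
    ∀ z : Z, c * ‖z‖ ≤ ‖T z‖ ∧ ‖T z‖ ≤ C * ‖z‖

/-- The space `ℓ¹`. -/
noncomputable abbrev ellOne : Type := lp (fun _ : ℕ => ℝ) 1

/-- `e` (in a Banach space `E`) is a spreading model of the sequence `y`. -/
def IsSpreadingModel {X E : Type} [NormedAddCommGroup X] [NormedSpace ℝ X]
    [NormedAddCommGroup E] [NormedSpace ℝ E] (y : ℕ → X) (e : ℕ → E) : Prop :=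
  ∃ ε : ℕ → ℝ, Antitone ε ∧ Tendsto ε atTop (𝓝 (0 : ℝ)) ∧
    ∀ (n : ℕ) (a : ℕ → ℝ), (∀ i < n, |a i| ≤ 1) →
      ∀ k : ℕ → ℕ, StrictMono k → n ≤ k 0 →
        |‖∑ i ∈ Finset.range n, a i • y (k i)‖ - ‖∑ i ∈ Finset.range n, a i • e i‖| ≤ ε n

/-- `F` is an initial segment of the finite set `G`. -/
def IsInitialSegmentOf (F G : Finset ℕ) : Prop := ∃ m : ℕ, F = G.filter (· ≤ m)

/-- A family of finite sets is thin if no member is a proper initial segment of another. -/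
def IsThinFamily (𝓕 : Set (Finset ℕ)) : Prop :=
  ∀ F ∈ 𝓕, ∀ G ∈ 𝓕, IsInitialSegmentOf F G → F = G

/-- `F` is an initial segment of the set `M ⊆ ℕ`. -/
def IsInitialSegmentOfSet (F : Finset ℕ) (M : Set ℕ) : Prop :=
  ∃ m : ℕ, ∀ a : ℕ, a ∈ F ↔ a ∈ M ∧ a ≤ m

/-- The family `𝓕` is large in the infinite set `M`: every infinite subset of `M` has an
initial segment belonging to `𝓕`. -/
def IsLargeIn (𝓕 : Set (Finset ℕ)) (M : Set ℕ) : Prop :=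
  ∀ N : Set ℕ, N ⊆ M → N.Infinite → ∃ F ∈ 𝓕, IsInitialSegmentOfSet F N

/-- `limsup_n sup {‖x_E‖ : E ∈ 𝓕, n ≤ min E} = 1`, stated via its `ε`-characterization
(using that the inner supremum is nonincreasing in `n`). -/
def TailSupNormOne {X : Type} [NormedAddCommGroup X] [NormedSpace ℝ X]
    (x : ℕ → X) (𝓕 : Set (Finset ℕ)) : Prop :=
  (∀ ε : ℝ, 0 < ε → ∃ n : ℕ, ∀ E ∈ 𝓕, (∀ i ∈ E, n ≤ i) → ‖∑ i ∈ E, x i‖ ≤ 1 + ε) ∧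
  (∀ ε : ℝ, 0 < ε → ∀ n : ℕ, ∃ E ∈ 𝓕, (∀ i ∈ E, n ≤ i) ∧ 1 - ε < ‖∑ i ∈ E, x i‖)

/-- The family `𝓖` built from `𝓕` along the subsequence `N`: unions `E₁ ∪ ⋯ ∪ Eₖ` of `k`
successive members of `𝓕` contained in `N` with `min E₁ = N (k-1)` (i.e. the `k`-th element
of `N`). -/
def GFamily (𝓕 : Set (Finset ℕ)) (N : ℕ → ℕ) : Set (Finset ℕ) :=
  {G | ∃ (k : ℕ) (E : ℕ → Finset ℕ), 0 < k ∧
    (∀ i < k, E i ∈ 𝓕 ∧ (E i).Nonempty ∧ ↑(E i) ⊆ Set.range N) ∧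
    (∀ i, i + 1 < k → ∀ a ∈ E i, ∀ b ∈ E (i + 1), a < b) ∧
    N (k - 1) ∈ E 0 ∧ (∀ a ∈ E 0, N (k - 1) ≤ a) ∧
    G = (Finset.range k).biUnion E}

/-! ### Combinatorics -/

lemma aux_diag (P : ℕ → Set ℕ → Prop) (M : Set ℕ) (hM : M.Infinite)
    (hered : ∀ m A B, B ⊆ A → P m A → P m B)
    (dense : ∀ m A, A ⊆ M → A.Infinite → ∃ B ⊆ A, B.Infinite ∧ P m B) :
    ∃ B ⊆ M, B.Infinite ∧ ∀ m ∈ B, P m (B ∩ Set.Ioi m) := by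
  classical
  have step : ∀ A : {A : Set ℕ // A ⊆ M ∧ A.Infinite}, ∃ B : {A : Set ℕ // A ⊆ M ∧ A.Infinite},
      (B : Set ℕ) ⊆ A ∩ Set.Ioi (sInf (A : Set ℕ)) ∧ P (sInf (A : Set ℕ)) B := by
    rintro ⟨A, hA, hAi⟩
    have h1 : (A ∩ Set.Ioi (sInf A)).Infinite := by
      have := hAi.sdiff (Set.finite_Iic (sInf A))
      refine this.mono ?_
      rintro a ⟨ha, hb⟩
      exact ⟨ha, by simpa using hb⟩
    obtain ⟨B, hB, hBi, hP⟩ := dense (sInf A) _ (Set.inter_subset_left.trans hA) h1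
    exact ⟨⟨B, (hB.trans Set.inter_subset_left).trans hA, hBi⟩, hB, hP⟩
  choose f hf1 hf2 using step
  let S : ℕ → {A : Set ℕ // A ⊆ M ∧ A.Infinite} := fun i => f^[i] ⟨M, subset_rfl, hM⟩
  have hS : ∀ i, S (i+1) = f (S i) := fun i => Function.iterate_succ_apply' f i _
  let n : ℕ → ℕ := fun i => sInf (S i : Set ℕ)
  have hmem : ∀ i, n i ∈ (S i : Set ℕ) := fun i => Nat.sInf_mem (S i).2.2.nonempty
  have hanti : ∀ i j, i ≤ j → (S j : Set ℕ) ⊆ S i := by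
    intro i j hij
    induction j, hij using Nat.le_induction with
    | base => exact subset_rfl
    | succ j _ ih =>
      rw [hS]
      exact ((hf1 (S j)).trans Set.inter_subset_left).trans ih
  have hmono : StrictMono n := by
    refine strictMono_nat_of_lt_succ fun i => ?_
    have := hmem (i+1)
    rw [hS] at this
    exact (hf1 _ this).2
  refine ⟨Set.range n, ?_, Set.infinite_range_of_injective hmono.injective, ?_⟩
  · rintro _ ⟨i, rfl⟩
    exact (S i).2.1 (hmem i)
  · rintro _ ⟨i, rfl⟩
    refine hered _ (S (i+1)) _ ?_ (by rw [hS]; exact hf2 _)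
    rintro _ ⟨⟨j, rfl⟩, hj⟩
    have hij : i < j := hmono.lt_iff_lt.1 hj
    exact hanti _ _ hij (hmem j)

lemma aux_fin {ι : Type*} (P : ι → Set ℕ → Prop) (M : Set ℕ)
    (hered : ∀ m A B, B ⊆ A → P m A → P m B)
    (dense : ∀ m A, A ⊆ M → A.Infinite → ∃ B ⊆ A, B.Infinite ∧ P m B) (S : Set ι) (hS : S.Finite)
    (A : Set ℕ) (hA : A ⊆ M) (hAi : A.Infinite) :
    ∃ B ⊆ A, B.Infinite ∧ ∀ i ∈ S, P i B := by
  induction S, hS using Set.Finite.induction_on with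
  | empty => exact ⟨A, subset_rfl, hAi, by simp⟩
  | @insert a s _ _ ih =>
    obtain ⟨B, hB, hBi, h⟩ := ih
    obtain ⟨C, hC, hCi, h'⟩ := dense a B (hB.trans hA) hBi
    refine ⟨C, hC.trans hB, hCi, ?_⟩
    intro i hi
    rcases Set.mem_insert_iff.1 hi with rfl | hi
    · exact h'
    · exact hered _ _ _ hC (h i hi)

/-- `M` accepts `s`. -/
def auxAcc (R : Set ℕ → Prop) (s : Finset ℕ) (M : Set ℕ) : Prop :=
  ∀ L ⊆ M, L.Infinite → (∀ a ∈ s, ∀ b ∈ L, a < b) → R (↑s ∪ L)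

def auxRej (R : Set ℕ → Prop) (s : Finset ℕ) (M : Set ℕ) : Prop :=
  ∀ L ⊆ M, L.Infinite → ¬ auxAcc R s L

lemma auxAcc.mono {R : Set ℕ → Prop} {s : Finset ℕ} {M M' : Set ℕ} (h : auxAcc R s M)
    (hM : M' ⊆ M) : auxAcc R s M' := fun L hL => h L (hL.trans hM)

lemma auxRej.mono {R : Set ℕ → Prop} {s : Finset ℕ} {M M' : Set ℕ} (h : auxRej R s M)
    (hM : M' ⊆ M) : auxRej R s M' := fun L hL => h L (hL.trans hM)

lemma aux_inf_Ioi {M : Set ℕ} (hM : M.Infinite) (m : ℕ) : (M ∩ Set.Ioi m).Infinite := by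
  refine (hM.sdiff (Set.finite_Iic m)).mono ?_
  rintro a ⟨ha, hb⟩
  exact ⟨ha, by simpa using hb⟩

lemma auxAcc_of_tail {R : Set ℕ → Prop} {s : Finset ℕ} {M : Set ℕ} {m : ℕ} (hm : m ∈ s)
    (h : auxAcc R s (M ∩ Set.Ioi m)) : auxAcc R s M := by
  intro L hL hLi hs
  exact h L (fun b hb => ⟨hL hb, hs m hm b hb⟩) hLi hs

lemma aux_galvin (R : Set ℕ → Prop)
    (hR : ∀ L : Set ℕ, L.Infinite → R L →
      ∃ m, ∀ L' : Set ℕ, L'.Infinite → (∀ a ≤ m, a ∈ L' ↔ a ∈ L) → R L')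
    (M : Set ℕ) (hM : M.Infinite) :
    ∃ B ⊆ M, B.Infinite ∧
      ((∀ L ⊆ B, L.Infinite → R L) ∨ (∀ L ⊆ B, L.Infinite → ¬ R L)) := by
  classical
  -- deciding
  have hdh : ∀ (s : Finset ℕ) A B, B ⊆ A → (auxAcc R s A ∨ auxRej R s A) →
      (auxAcc R s B ∨ auxRej R s B) := by
    intro s A B hBA h
    exact h.imp (fun h => h.mono hBA) (fun h => h.mono hBA)
  have hdd : ∀ (s : Finset ℕ) A, A ⊆ M → A.Infinite →
      ∃ B ⊆ A, B.Infinite ∧ (auxAcc R s B ∨ auxRej R s B) := by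
    intro s A _ hAi
    by_cases h : auxRej R s A
    · exact ⟨A, subset_rfl, hAi, Or.inr h⟩
    · unfold auxRej at h
      push Not at h
      obtain ⟨L, h1, h2, h3⟩ := h
      exact ⟨L, h1, h2, Or.inl h3⟩
  obtain ⟨M0, hM0, hM0i, hdec0⟩ := hdd ∅ M subset_rfl hM
  obtain ⟨M1, hM1, hM1i, hdec⟩ := aux_diag
    (fun m A => ∀ s ∈ {s : Finset ℕ | s ⊆ Finset.range (m+1)}, (auxAcc R s A ∨ auxRej R s A)) M0 hM0i
    (fun m A B hBA h s hs => hdh s A B hBA (h s hs))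
    (fun m A hA hAi => by
      exact aux_fin (fun s A => auxAcc R s A ∨ auxRej R s A) M hdh hdd _
        ((Finset.range (m+1)).powerset.finite_toSet.subset (by intro s hs; exact Finset.mem_coe.2 (Finset.mem_powerset.2 hs))) A
        (hA.trans hM0) hAi)
  have hdec1 : ∀ s : Finset ℕ, ↑s ⊆ M1 → auxAcc R s M1 ∨ auxRej R s M1 := by
    intro s hs
    rcases s.eq_empty_or_nonempty with rfl | hne
    · exact hdh _ _ _ hM1 hdec0
    · have hmem := s.max'_mem hne
      rcases hdec _ (hs hmem) s (by
        intro a ha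
        have := s.le_max' a ha
        simp; omega) with h | h
      · exact Or.inl (auxAcc_of_tail hmem h)
      · right
        intro L hL hLi hacc
        refine h (L ∩ Set.Ioi (s.max' hne)) ?_ (aux_inf_Ioi hLi _) (hacc.mono Set.inter_subset_left)
        exact Set.inter_subset_inter_left _ hL
  rcases hdec1 ∅ (by simp) with h0 | h0
  · refine ⟨M1, hM1.trans hM0, hM1i, Or.inl ?_⟩
    intro L hL hLi
    simpa using h0 L hL hLi (by simp)
  -- rejection is inherited by almost all one point extensions
  have hext : ∀ s : Finset ℕ, ↑s ⊆ M1 → auxRej R s M1 →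
      {n ∈ M1 | (∀ a ∈ s, a < n) ∧ ¬ auxRej R (insert n s) M1}.Finite := by
    intro s hs hrej
    by_contra hinf
    set T := {n ∈ M1 | (∀ a ∈ s, a < n) ∧ ¬ auxRej R (insert n s) M1} with hT
    refine hrej T (fun n hn => hn.1) hinf ?_
    intro L hL hLi hsL
    have hn := Nat.sInf_mem hLi.nonempty
    set n := sInf L with hndef
    obtain ⟨hn1, hn2, hn3⟩ := hL hn
    have hacc : auxAcc R (insert n s) M1 := by
      refine (hdec1 _ ?_).resolve_right hn3
      intro a ha
      rcases Finset.mem_insert.1 (Finset.mem_coe.1 ha) with rfl | ha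
      · exact hn1
      · exact hs ha
    have := hacc (L ∩ Set.Ioi n) (fun a ha => (hL ha.1).1) (aux_inf_Ioi hLi _) (by
      intro a ha b hb
      rcases Finset.mem_insert.1 ha with rfl | ha
      · exact hb.2
      · exact hsL a ha b hb.1)
    convert this using 1
    ext a
    simp only [Set.mem_union, Finset.mem_coe, Finset.mem_insert, Set.mem_inter_iff, Set.mem_Ioi]
    constructor
    · rintro (h | h)
      · exact Or.inl (Or.inr h)
      · rcases (Nat.sInf_le h).eq_or_lt with h' | h'
        · exact Or.inl (Or.inl h'.symm)
        · exact Or.inr ⟨h, h'⟩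
    · rintro ((h | h) | h)
      · right; rw [h]; exact hn
      · exact Or.inl h
      · exact Or.inr h.1
  have hQd : ∀ (s : Finset ℕ) A, A ⊆ M1 → A.Infinite → ∃ B ⊆ A, B.Infinite ∧
      (↑s ⊆ M1 → auxRej R s M1 → ∀ n ∈ B, (∀ a ∈ s, a < n) → auxRej R (insert n s) M1) := by
    intro s A hA hAi
    by_cases h : ↑s ⊆ M1 ∧ auxRej R s M1
    · refine ⟨_, Set.sdiff_subset, hAi.sdiff (hext s h.1 h.2), ?_⟩
      intro _ _ n hn hlt
      by_contra hcon
      exact hn.2 ⟨hA hn.1, hlt, hcon⟩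
    · exact ⟨A, subset_rfl, hAi, fun h1 h2 => absurd ⟨h1, h2⟩ h⟩
  obtain ⟨M2, hM2, hM2i, hM2e⟩ := hQd ∅ M1 subset_rfl hM1i
  obtain ⟨B, hB, hBi, hBr⟩ := aux_diag
    (fun m A => ∀ s ∈ {s : Finset ℕ | s ⊆ Finset.range (m+1)}, (↑s ⊆ M1 → auxRej R s M1 → ∀ n ∈ A,
      (∀ a ∈ s, a < n) → auxRej R (insert n s) M1)) M2 hM2i
    (fun m A B hBA h s hs h1 h2 n hn => h s hs h1 h2 n (hBA hn))
    (fun m A hA hAi => by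
      exact aux_fin (fun (s : Finset ℕ) A => (↑s ⊆ M1 → auxRej R s M1 → ∀ n ∈ A,
        (∀ a ∈ s, a < n) → auxRej R (insert n s) M1)) M1
        (fun s A B hBA h h1 h2 n hn => h h1 h2 n (hBA hn)) hQd _
        ((Finset.range (m+1)).powerset.finite_toSet.subset (by intro s hs; exact Finset.mem_coe.2 (Finset.mem_powerset.2 hs))) A
        (hA.trans hM2) hAi)
  have hall : ∀ s : Finset ℕ, ↑s ⊆ B → auxRej R s M1 := by
    intro s
    induction s using Finset.induction_on_max with
    | empty => intro _; exact h0
    | insert n s hlt ih =>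
      intro hs
      have hs' : ↑s ⊆ B := fun a ha => hs (by simp at ha ⊢; exact Or.inr ha)
      have hn : n ∈ B := hs (by simp)
      have hr := ih hs'
      rcases s.eq_empty_or_nonempty with rfl | hne
      · exact hM2e (by simp) hr n (hB hn) (by simp)
      · refine hBr (s.max' hne) (hs' (s.max'_mem hne)) s ?_ (hs'.trans (hB.trans hM2)) hr n
          ⟨hn, hlt _ (s.max'_mem hne)⟩ hlt
        intro a ha
        have := s.le_max' a ha
        simp; omega
  refine ⟨B, (hB.trans hM2).trans (hM1.trans hM0), hBi, Or.inr ?_⟩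
  intro L hL hLi hRL
  obtain ⟨m, hm⟩ := hR L hLi hRL
  let s : Finset ℕ := (Finset.range (m+1)).filter (· ∈ L)
  have hs : ∀ a, a ∈ s ↔ a ≤ m ∧ a ∈ L := by
    intro a; simp [s]
  refine hall s (fun a ha => hL ((hs a).1 ha).2) (L ∩ Set.Ioi m) ?_ (aux_inf_Ioi hLi _) ?_
  · exact fun a ha => hM2 (hB (hL ha.1))
  · intro L' hL' hL'i _
    refine hm _ (hL'i.mono Set.subset_union_right) ?_
    intro a ha
    simp only [Set.mem_union, Finset.mem_coe, hs]
    constructor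
    · rintro (h | h)
      · exact h.2
      · exact (hL' h).1
    · intro h; exact Or.inl ⟨ha, h⟩


lemma aux_nth_range {k : ℕ → ℕ} (hk : StrictMono k) : Nat.nth (· ∈ Set.range k) = k := by
  have hinf : (Set.range k).Infinite := Set.infinite_range_of_injective hk.injective
  refine (StrictMono.range_inj (Nat.nth_strictMono hinf) hk).1 ?_
  exact Nat.range_nth_of_infinite hinf

lemma aux_nth_congr {L L' : Set ℕ} (hL : L.Infinite) (n : ℕ)
    (h : ∀ a ≤ Nat.nth (· ∈ L) n, a ∈ L' ↔ a ∈ L) : ∀ i < n, Nat.nth (· ∈ L') i = Nat.nth (· ∈ L) i := by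
  classical
  intro i hi
  set a := Nat.nth (· ∈ L) i with ha
  have haL : a ∈ L := Nat.nth_mem_of_infinite (p := (· ∈ L)) hL i
  have hle : a ≤ Nat.nth (· ∈ L) n := (Nat.nth_strictMono (p := (· ∈ L)) hL).monotone hi.le
  have haL' : a ∈ L' := (h a hle).2 haL
  have hc : Nat.count (· ∈ L') a = i := by
    have h1 : Nat.count (· ∈ L) a = i := Nat.count_nth_of_infinite (p := (· ∈ L)) hL i
    rw [← h1]
    simp only [Nat.count_eq_card_filter_range]
    congr 1
    refine Finset.filter_congr ?_
    intro b hb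
    exact h b ((Finset.mem_range.1 hb).le.trans hle)
  have := Nat.nth_count (p := (· ∈ L')) haL'
  rw [hc] at this
  exact this

lemma aux_ramsey (n : ℕ) (R : (ℕ → ℕ) → Prop)
    (hR : ∀ k k', (∀ i < n, k i = k' i) → R k → R k') (M : Set ℕ) (hM : M.Infinite) :
    ∃ B ⊆ M, B.Infinite ∧ ((∀ k, StrictMono k → (∀ i, k i ∈ B) → R k) ∨
      (∀ k, StrictMono k → (∀ i, k i ∈ B) → ¬ R k)) := by
  obtain ⟨B, hB, hBi, h⟩ := aux_galvin (fun L => R (Nat.nth (· ∈ L))) (by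
    intro L hL hRL
    refine ⟨Nat.nth (· ∈ L) n, fun L' hL' h => ?_⟩
    exact hR _ _ (fun i hi => (aux_nth_congr hL n h i hi).symm) hRL) M hM
  refine ⟨B, hB, hBi, ?_⟩
  rcases h with h | h
  · left
    intro k hk hkB
    have := h (Set.range k) (Set.range_subset_iff.2 hkB) (Set.infinite_range_of_injective hk.injective)
    simpa only [aux_nth_range hk] using this
  · right
    intro k hk hkB
    have := h (Set.range k) (Set.range_subset_iff.2 hkB) (Set.infinite_range_of_injective hk.injective)
    simpa only [aux_nth_range hk] using this

section
variable {X : Type} [NormedAddCommGroup X] [NormedSpace ℝ X]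

lemma aux_single (y : ℕ → X) (C : ℝ) (hC : ∀ j, ‖y j‖ ≤ C) (n : ℕ) (a : ℕ → ℝ) (δ : ℝ) (hδ : 0 < δ)
    (M : Set ℕ) (hM : M.Infinite) :
    ∃ B ⊆ M, B.Infinite ∧ ∀ k k', StrictMono k → StrictMono k' → (∀ i, k i ∈ B) → (∀ i, k' i ∈ B) →
      |‖∑ i ∈ Finset.range n, a i • y (k i)‖ - ‖∑ i ∈ Finset.range n, a i • y (k' i)‖| ≤ δ := by
  set D : ℝ := ∑ i ∈ Finset.range n, |a i| * C with hD
  have hbd : ∀ k : ℕ → ℕ, ‖∑ i ∈ Finset.range n, a i • y (k i)‖ ≤ D := by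
    intro k
    refine (norm_sum_le _ _).trans (Finset.sum_le_sum fun i _ => ?_)
    rw [norm_smul, Real.norm_eq_abs]
    exact mul_le_mul_of_nonneg_left (hC _) (abs_nonneg _)
  obtain ⟨B, hB, hBi, h⟩ := aux_fin
    (fun (q : ℕ) A => (∀ k, StrictMono k → (∀ i, k i ∈ A) → ‖∑ i ∈ Finset.range n, a i • y (k i)‖ ≤ q * δ) ∨
      (∀ k, StrictMono k → (∀ i, k i ∈ A) → ¬ ‖∑ i ∈ Finset.range n, a i • y (k i)‖ ≤ q * δ)) M
    (fun q A B hBA h => h.imp (fun h k hk hkB => h k hk (fun i => hBA (hkB i)))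
      (fun h k hk hkB => h k hk (fun i => hBA (hkB i))))
    (fun q A _ hAi => aux_ramsey n (fun k => ‖∑ i ∈ Finset.range n, a i • y (k i)‖ ≤ q * δ) (by
      intro k k' hkk' h
      have : ∑ i ∈ Finset.range n, a i • y (k i) = ∑ i ∈ Finset.range n, a i • y (k' i) :=
        Finset.sum_congr rfl (fun i hi => by rw [hkk' i (Finset.mem_range.1 hi)])
      rwa [this] at h) A hAi)
    (Set.Iic ⌈D / δ⌉₊) (Set.finite_Iic _) M subset_rfl hM
  refine ⟨B, hB, hBi, ?_⟩
  have key : ∀ k k', StrictMono k → StrictMono k' → (∀ i, k i ∈ B) → (∀ i, k' i ∈ B) →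
      ‖∑ i ∈ Finset.range n, a i • y (k' i)‖ ≤ ‖∑ i ∈ Finset.range n, a i • y (k i)‖ + δ := by
    intro k k' hk hk' hkB hkB'
    set v := ‖∑ i ∈ Finset.range n, a i • y (k i)‖ with hv
    have hv0 : 0 ≤ v := norm_nonneg _
    by_contra hcon
    push Not at hcon
    have h1 : v ≤ (⌈v / δ⌉₊ : ℝ) * δ := by
      have := Nat.le_ceil (v / δ)
      rwa [div_le_iff₀ hδ] at this
    have h2 : (⌈v / δ⌉₊ : ℝ) * δ < v + δ := by
      have := Nat.ceil_lt_add_one (div_nonneg hv0 hδ.le)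
      calc (⌈v / δ⌉₊ : ℝ) * δ < (v / δ + 1) * δ := by gcongr
        _ = v + δ := by field_simp
    have h3 : ⌈v / δ⌉₊ ≤ ⌈D / δ⌉₊ := Nat.ceil_mono (by gcongr; exact hbd k)
    rcases h _ h3 with h | h
    · have := h k' hk' hkB'
      linarith
    · exact h k hk hkB h1
  intro k k' hk hk' hkB hkB'
  rw [abs_le]
  have := key k k' hk hk' hkB hkB'
  have := key k' k hk' hk hkB' hkB
  constructor <;> linarith

lemma aux_unif (y : ℕ → X) (C : ℝ) (hC : ∀ j, ‖y j‖ ≤ C) (n : ℕ) (δ : ℝ) (hδ : 0 < δ)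
    (M : Set ℕ) (hM : M.Infinite) :
    ∃ B ⊆ M, B.Infinite ∧ ∀ a : ℕ → ℝ, (∀ i < n, |a i| ≤ 1) →
      ∀ k k', StrictMono k → StrictMono k' → (∀ i, k i ∈ B) → (∀ i, k' i ∈ B) →
      |‖∑ i ∈ Finset.range n, a i • y (k i)‖ - ‖∑ i ∈ Finset.range n, a i • y (k' i)‖| ≤ δ := by
  have hC0 : 0 ≤ C := (norm_nonneg _).trans (hC 0)
  set η : ℝ := (δ / 3) / (n * C + 1) with hη
  have hden : 0 < n * C + 1 := by positivity
  have hη0 : 0 < η := by positivity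
  have hηb : n * (η * C) ≤ δ / 3 := by
    have : η * (n * C + 1) = δ / 3 := by rw [hη]; field_simp
    nlinarith
  obtain ⟨t, _, htf, htc⟩ := (isCompact_closedBall (0 : Fin n → ℝ) 1).finite_cover_balls hη0
  let ext : (Fin n → ℝ) → ℕ → ℝ := fun b i => if h : i < n then b ⟨i, h⟩ else 0
  obtain ⟨B, hB, hBi, h⟩ := aux_fin
    (fun (b : Fin n → ℝ) A => ∀ k k', StrictMono k → StrictMono k' → (∀ i, k i ∈ A) → (∀ i, k' i ∈ A) →
      |‖∑ i ∈ Finset.range n, ext b i • y (k i)‖ - ‖∑ i ∈ Finset.range n, ext b i • y (k' i)‖| ≤ δ / 3) M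
    (fun b A B hBA h k k' hk hk' hkB hkB' => h k k' hk hk' (fun i => hBA (hkB i)) (fun i => hBA (hkB' i)))
    (fun b A _ hAi => aux_single y C hC n (ext b) (δ / 3) (by positivity) A hAi) t htf M subset_rfl hM
  refine ⟨B, hB, hBi, ?_⟩
  intro a ha k k' hk hk' hkB hkB'
  have hmem : (fun i : Fin n => a i) ∈ Metric.closedBall (0 : Fin n → ℝ) 1 := by
    rw [mem_closedBall_zero_iff, pi_norm_le_iff_of_nonneg zero_le_one]
    intro i
    exact ha i i.2
  obtain ⟨b, hbt, hb⟩ := Set.mem_iUnion₂.1 (htc hmem)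
  have hab : ∀ i < n, |a i - ext b i| ≤ η := by
    intro i hi
    have h1 : ‖(fun i : Fin n => a i) - b‖ ≤ η := by
      rw [← dist_eq_norm]; exact (Metric.mem_ball.1 hb).le
    have h2 := (norm_le_pi_norm _ (⟨i, hi⟩ : Fin n)).trans h1
    simpa [ext, hi] using h2
  have happ : ∀ k : ℕ → ℕ,
      |‖∑ i ∈ Finset.range n, a i • y (k i)‖ - ‖∑ i ∈ Finset.range n, ext b i • y (k i)‖| ≤ δ / 3 := by
    intro k
    refine (abs_norm_sub_norm_le _ _).trans ?_
    rw [← Finset.sum_sub_distrib]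
    refine (norm_sum_le _ _).trans (le_trans ?_ hηb)
    calc _ ≤ ∑ i ∈ Finset.range n, η * C := by
          refine Finset.sum_le_sum fun i hi => ?_
          rw [← sub_smul, norm_smul, Real.norm_eq_abs]
          exact mul_le_mul (hab i (Finset.mem_range.1 hi)) (hC _) (norm_nonneg _) hη0.le
      _ = n * (η * C) := by simp
  have h1 := abs_le.1 (happ k)
  have h2 := abs_le.1 (happ k')
  have h3 := abs_le.1 (h b hbt k k' hk hk' hkB hkB')
  rw [abs_le]
  constructor <;> linarith

lemma aux_bs (y : ℕ → X) (C : ℝ) (hC : ∀ j, ‖y j‖ ≤ C) :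
    ∃ φ : ℕ → ℕ, StrictMono φ ∧ ∀ (n : ℕ) (a : ℕ → ℝ), (∀ i < n, |a i| ≤ 1) →
      ∀ k k' : ℕ → ℕ, StrictMono k → StrictMono k' → n ≤ k 0 → n ≤ k' 0 →
      |‖∑ i ∈ Finset.range n, a i • y (φ (k i))‖ - ‖∑ i ∈ Finset.range n, a i • y (φ (k' i))‖|
        ≤ 1 / ((n : ℝ) + 1) := by
  let P : ℕ → Set ℕ → Prop := fun n A => ∀ a : ℕ → ℝ, (∀ i < n, |a i| ≤ 1) →
      ∀ k k', StrictMono k → StrictMono k' → (∀ i, k i ∈ A) → (∀ i, k' i ∈ A) →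
      |‖∑ i ∈ Finset.range n, a i • y (k i)‖ - ‖∑ i ∈ Finset.range n, a i • y (k' i)‖| ≤ 1 / ((n : ℝ) + 1)
  have hPh : ∀ m A B, B ⊆ A → P m A → P m B := by
    intro m A B hBA h a ha k k' hk hk' hkB hkB'
    exact h a ha k k' hk hk' (fun i => hBA (hkB i)) (fun i => hBA (hkB' i))
  have hPd : ∀ m A, A ⊆ Set.univ → A.Infinite → ∃ B ⊆ A, B.Infinite ∧ P m B := by
    intro m A _ hAi
    exact aux_unif y C hC m _ (by positivity) A hAi
  obtain ⟨B, _, hBi, h⟩ := aux_diag (fun m A => ∀ j ∈ Set.Iic (m+1), P j A) Set.univ Set.infinite_univ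
    (fun m A B hBA h j hj => hPh j A B hBA (h j hj))
    (fun m A hA hAi => aux_fin P Set.univ hPh hPd _ (Set.finite_Iic _) A hA hAi)
  have hφ : StrictMono (Nat.nth (· ∈ B)) := Nat.nth_strictMono (p := (· ∈ B)) hBi
  have hφB : ∀ i, Nat.nth (· ∈ B) i ∈ B := fun i => Nat.nth_mem_of_infinite (p := (· ∈ B)) hBi i
  refine ⟨Nat.nth (· ∈ B), hφ, ?_⟩
  intro n a ha k k' hk hk' hn hn'
  rcases n with _ | n
  · simp
  · refine h (Nat.nth (· ∈ B) n) (hφB n) (n+1) ?_ a ha (Nat.nth (· ∈ B) ∘ k) (Nat.nth (· ∈ B) ∘ k')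
      (hφ.comp hk) (hφ.comp hk') ?_ ?_
    · have := hφ.id_le n
      simpa using this
    · intro i
      refine ⟨hφB _, hφ ?_⟩
      have := hk.monotone (Nat.zero_le i)
      omega
    · intro i
      refine ⟨hφB _, hφ ?_⟩
      have := hk'.monotone (Nat.zero_le i)
      omega

lemma aux_complete {V : Type} [AddCommGroup V] [Module ℝ V] (p : Seminorm ℝ V) :
    ∃ (E : Type) (_ : NormedAddCommGroup E) (_ : NormedSpace ℝ E) (_ : CompleteSpace E) (ι : V →ₗ[ℝ] E),
      ∀ v, ‖ι v‖ = p v := by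
  let _ : Norm V := ⟨p⟩
  have core : SeminormedSpace.Core ℝ V :=
    { norm_nonneg := fun v => apply_nonneg p v
      norm_smul := fun c v => map_smul_eq_mul p c v
      norm_triangle := fun v w => map_add_le_add p v w }
  let _ : SeminormedAddCommGroup V := SeminormedAddCommGroup.ofCore core
  let _ : NormedSpace ℝ V := { norm_smul_le := fun c v => (core.norm_smul c v).le }
  refine ⟨UniformSpace.Completion V, inferInstance, inferInstance, inferInstance,
    (UniformSpace.Completion.toComplₗᵢ (𝕜 := ℝ) (E := V)).toLinearMap, fun v => ?_⟩
  exact (UniformSpace.Completion.toComplₗᵢ (𝕜 := ℝ) (E := V)).norm_map v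

lemma aux_ulim (u : ℕ → ℝ) (D : ℝ) (hu : ∀ t, |u t| ≤ D) :
    ∃ l, Tendsto u (hyperfilter ℕ : Filter ℕ) (𝓝 l) := by
  obtain ⟨l, _, hl⟩ := (isCompact_Icc (a := -D) (b := D)).ultrafilter_le_nhds
    ((hyperfilter ℕ).map u) (by
      rw [le_principal_iff, Ultrafilter.coe_map, Filter.mem_map]
      exact Filter.mem_of_superset univ_mem (fun t _ => abs_le.1 (hu t)))
  exact ⟨l, hl⟩

lemma aux_spreading (y : ℕ → X) (C : ℝ) (hC : ∀ j, ‖y j‖ ≤ C) :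
    ∃ φ : ℕ → ℕ, StrictMono φ ∧
      ∃ (E : Type) (_ : NormedAddCommGroup E) (_ : NormedSpace ℝ E) (_ : CompleteSpace E) (e : ℕ → E),
        IsSpreadingModel (fun j => y (φ j)) e := by
  obtain ⟨φ, hφ, h⟩ := aux_bs y C hC
  refine ⟨φ, hφ, ?_⟩
  let T : ℕ → (ℕ →₀ ℝ) →ₗ[ℝ] X := fun t => Finsupp.linearCombination ℝ (fun i => y (φ (t + i)))
  have hex : ∀ a : ℕ →₀ ℝ, ∃ l, Tendsto (fun t => ‖T t a‖) (hyperfilter ℕ : Filter ℕ) (𝓝 l) := by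
    intro a
    refine aux_ulim _ (∑ i ∈ a.support, |a i| * C) fun t => ?_
    rw [abs_of_nonneg (norm_nonneg _)]
    simp only [T, Finsupp.linearCombination_apply, Finsupp.sum]
    refine (norm_sum_le _ _).trans (Finset.sum_le_sum fun i _ => ?_)
    rw [norm_smul, Real.norm_eq_abs]
    exact mul_le_mul_of_nonneg_left (hC _) (abs_nonneg _)
  choose q hq using hex
  let p : Seminorm ℝ (ℕ →₀ ℝ) := Seminorm.of q (by
      intro a b
      refine le_of_tendsto_of_tendsto' (hq (a + b)) ((hq a).add (hq b)) fun t => ?_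
      rw [map_add]
      exact norm_add_le _ _) (by
      intro c a
      refine tendsto_nhds_unique (hq (c • a)) ?_
      simp only [map_smul, norm_smul]
      exact (hq a).const_mul _)
  obtain ⟨E, i1, i2, i3, ι, hι⟩ := aux_complete p
  refine ⟨E, i1, i2, i3, fun i => ι (Finsupp.single i 1), fun n => 1 / ((n : ℝ) + 1), ?_, ?_, ?_⟩
  · intro m n hmn
    exact one_div_le_one_div_of_le (by positivity) (by exact_mod_cast Nat.succ_le_succ hmn)
  · exact tendsto_one_div_add_atTop_nhds_zero_nat
  · intro n a ha k hk hn
    have h1 : ‖∑ i ∈ Finset.range n, a i • ι (Finsupp.single i 1)‖ =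
        q (∑ i ∈ Finset.range n, a i • Finsupp.single i 1) := by
      rw [← show p _ = q _ from rfl, ← hι]
      simp only [map_sum, map_smul]
    rw [h1]
    have h2 := hq (∑ i ∈ Finset.range n, a i • Finsupp.single i 1)
    have h3 : ∀ t, T t (∑ i ∈ Finset.range n, a i • Finsupp.single i 1) =
        ∑ i ∈ Finset.range n, a i • y (φ (t + i)) := by
      intro t
      simp [T, map_sum]
    simp only [h3] at h2
    refine le_of_tendsto ((tendsto_const_nhds.sub h2).abs) ?_
    have hev : ∀ᶠ t in atTop, n ≤ t := eventually_ge_atTop n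
    have hev' := (Nat.hyperfilter_le_atTop : (hyperfilter ℕ : Filter ℕ) ≤ atTop) hev
    filter_upwards [hev'] with t ht
    exact h n a ha k (fun i => t + i) hk (fun i j hij => Nat.add_lt_add_left hij t) hn ht

end


section
variable {X : Type} [NormedAddCommGroup X] [NormedSpace ℝ X]

lemma aux_mazur (w : ℕ → X) (hw : WeaklyNull w) (n : ℕ) (δ : ℝ) (hδ : 0 < δ) :
    ∃ n', n < n' ∧ ∃ v ∈ convexHull ℝ (w '' Set.Ico n n'), ‖v‖ ≤ δ := by
  classical
  have h0 : (0 : X) ∈ closure (convexHull ℝ (w '' Set.Ici n)) := by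
    by_contra hcon
    obtain ⟨f, u, h1, h2⟩ := geometric_hahn_banach_point_closed
      (convex_convexHull ℝ (w '' Set.Ici n)).closure isClosed_closure hcon
    rw [map_zero] at h1
    have hev : ∀ᶠ j in atTop, f (w j) < u := (hw f).eventually (gt_mem_nhds h1)
    obtain ⟨j, hj, hjn⟩ := (hev.and (eventually_ge_atTop n)).exists
    have := h2 (w j) (subset_closure (subset_convexHull ℝ _ ⟨j, hjn, rfl⟩))
    linarith
  obtain ⟨v, hv, hvd⟩ := Metric.mem_closure_iff.1 h0 δ hδ
  rw [dist_comm, dist_zero_right] at hvd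
  rw [convexHull_eq_union_convexHull_finite_subsets] at hv
  obtain ⟨t, ht, hvt⟩ := Set.mem_iUnion₂.1 hv
  obtain ⟨s, hs, rfl⟩ := Finset.subset_set_image_iff.1 ht
  refine ⟨s.sup id + n + 1, by omega, v, ?_, hvd.le⟩
  refine convexHull_mono ?_ hvt
  intro a ha
  simp only [Finset.coe_image, Set.mem_image, Finset.mem_coe] at ha
  obtain ⟨i, hi, rfl⟩ := ha
  refine ⟨i, ⟨hs hi, ?_⟩, rfl⟩
  have : id i ≤ s.sup id := Finset.le_sup hi
  simp only [id] at this
  omega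

open scoped Pointwise in
lemma aux_suppress (w : ℕ → X) (hw : WeaklyNull w) (K : ℕ) (σ : ℕ → ℝ) (hσ : ∀ i, |σ i| = 1) (c : ℝ)
    (h : ∀ k : ℕ → ℕ, StrictMono k → ‖∑ i ∈ Finset.range K, σ i • w (k i)‖ ≤ c) (δ : ℝ) (hδ : 0 < δ) :
    ∃ u : ℕ → ℕ, StrictMono u ∧ ∀ S ⊆ Finset.range K, ‖∑ i ∈ S, σ i • w (u i)‖ ≤ c + K * δ := by
  classical
  choose nx hnx v hv hvd using fun n => aux_mazur w hw n δ hδ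
  let u : ℕ → ℕ := fun i => nx^[i] 0
  have hu : ∀ i, u (i+1) = nx (u i) := fun i => Function.iterate_succ_apply' nx i 0
  have hus : StrictMono u := strictMono_nat_of_lt_succ fun i => by rw [hu]; exact hnx _
  refine ⟨u, hus, ?_⟩
  intro S hS
  let T : ℕ → Set X := fun i => σ i • (w '' Set.Ico (u i) (u (i+1)))
  let g : ℕ → X := fun i => if i ∈ S then w (u i) else v (u i)
  have hg : ∀ i, σ i • g i ∈ convexHull ℝ (T i) := by
    intro i
    simp only [T, convexHull_smul]
    refine Set.smul_mem_smul_set ?_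
    by_cases hi : i ∈ S
    · simp only [g, hi, if_true]
      exact subset_convexHull ℝ _ ⟨u i, ⟨le_rfl, hus (Nat.lt_succ_self i)⟩, rfl⟩
    · simp only [g, hi, if_false]
      rw [hu]
      exact hv _
  have hmem : ∑ i ∈ Finset.range K, σ i • g i ∈ convexHull ℝ (∑ i ∈ Finset.range K, T i) := by
    rw [convexHull_sum]
    exact (Set.mem_finsetSum _ _ _).2 ⟨fun i => σ i • g i, fun {i} _ => hg i, rfl⟩
  have hball : convexHull ℝ (∑ i ∈ Finset.range K, T i) ⊆ Metric.closedBall 0 c := by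
    refine convexHull_min ?_ (convex_closedBall 0 c)
    intro z hz
    obtain ⟨f, hf, rfl⟩ := (Set.mem_finsetSum _ _ _).1 hz
    have hex : ∀ i, ∃ k, k ∈ Set.Ico (u i) (u (i+1)) ∧ (i < K → σ i • w k = f i) := by
      intro i
      by_cases hi : i < K
      · obtain ⟨z, ⟨k, hk, rfl⟩, hz⟩ := hf (Finset.mem_range.2 hi)
        exact ⟨k, hk, fun _ => hz⟩
      · exact ⟨u i, ⟨le_rfl, hus (Nat.lt_succ_self i)⟩, fun h => absurd h hi⟩
    choose k hk1 hk2 using hex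
    rw [mem_closedBall_zero_iff]
    have hks : StrictMono k := strictMono_nat_of_lt_succ fun i => (hk1 i).2.trans_le (hk1 (i+1)).1
    rw [← Finset.sum_congr rfl (fun i hi => hk2 i (Finset.mem_range.1 hi))]
    exact h k hks
  have hle : ‖∑ i ∈ Finset.range K, σ i • g i‖ ≤ c := mem_closedBall_zero_iff.1 (hball hmem)
  have hsplit : ∑ i ∈ S, σ i • w (u i) = ∑ i ∈ Finset.range K, σ i • g i -
      ∑ i ∈ Finset.range K \ S, σ i • v (u i) := by
    rw [← Finset.sum_sdiff hS]
    have e1 : ∑ i ∈ Finset.range K \ S, σ i • g i = ∑ i ∈ Finset.range K \ S, σ i • v (u i) :=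
      Finset.sum_congr rfl fun i hi => by simp only [g, (Finset.mem_sdiff.1 hi).2, if_false]
    have e2 : ∑ i ∈ S, σ i • g i = ∑ i ∈ S, σ i • w (u i) :=
      Finset.sum_congr rfl fun i hi => by simp only [g, hi, if_true]
    rw [e1, e2]; abel
  rw [hsplit]
  refine (norm_sub_le _ _).trans (add_le_add hle ?_)
  refine (norm_sum_le _ _).trans ?_
  calc _ ≤ ∑ i ∈ Finset.range K \ S, δ := by
        refine Finset.sum_le_sum fun i _ => ?_
        rw [norm_smul, Real.norm_eq_abs, hσ, one_mul]
        exact hvd _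
    _ ≤ ∑ i ∈ Finset.range K, δ :=
        Finset.sum_le_sum_of_subset_of_nonneg Finset.sdiff_subset (fun _ _ _ => hδ.le)
    _ = K * δ := by simp

def auxGood (x y : ℕ → X) : Prop :=
  (∃ p q : ℕ → ℕ, (∀ j, y j ∈ Submodule.span ℝ (x '' (Finset.Icc (p j) (q j) : Finset ℕ))) ∧
    (∀ j, p j ≤ q j) ∧ (∀ j, q j < p (j+1))) ∧
  Tendsto (fun j => ‖y j‖) atTop (𝓝 1) ∧ WeaklyNull y

lemma aux_blk_lt {p q : ℕ → ℕ} (h1 : ∀ j, p j ≤ q j) (h2 : ∀ j, q j < p (j+1)) {i j : ℕ} (hij : i < j) :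
    q i < p j := by
  have hp : StrictMono p := strictMono_nat_of_lt_succ fun i => (h1 i).trans_lt (h2 i)
  exact (h2 i).trans_le (hp.monotone hij)

lemma auxGood.comp {x y : ℕ → X} (h : auxGood x y) {φ : ℕ → ℕ} (hφ : StrictMono φ) :
    auxGood x (fun j => y (φ j)) := by
  obtain ⟨⟨p, q, h1, h2, h3⟩, h4, h5⟩ := h
  refine ⟨⟨fun j => p (φ j), fun j => q (φ j), fun j => h1 _, fun j => h2 _, fun j => ?_⟩, ?_, ?_⟩
  · exact aux_blk_lt h2 h3 (hφ (Nat.lt_succ_self j))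
  · exact h4.comp hφ.tendsto_atTop
  · exact fun f => (h5 f).comp hφ.tendsto_atTop

lemma aux_sum_two (m : ℕ) (w : ℕ → X) :
    ∑ i ∈ Finset.range (m + 2), (if i = 0 then (1:ℝ) else if i = 1 then -1 else 0) • w i = w 0 - w 1 := by
  rw [Finset.sum_range_succ', Finset.sum_range_succ']
  simp [sub_eq_add_neg, add_comm]

lemma aux_diff (x : ℕ → X)
    (hsm : ∀ (E : Type) [NormedAddCommGroup E] [NormedSpace ℝ E] [CompleteSpace E],
      ∀ (y : ℕ → X) (e : ℕ → E), IsBlockBasis x y → (∀ j, ‖y j‖ = 1) → WeaklyNull y →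
        IsSpreadingModel y e → ‖e 0 - e 1‖ = 1)
    (y : ℕ → X) (hy : auxGood x y) :
    ∃ φ : ℕ → ℕ, StrictMono φ ∧ auxGood x (fun j => y (φ (2 * j)) - y (φ (2 * j + 1))) := by
  obtain ⟨j0, hj0⟩ := eventually_atTop.1 (hy.2.1.eventually (lt_mem_nhds (show (1/2 : ℝ) < 1 by norm_num)))
  have hj0s : StrictMono (fun j => j0 + j) := fun i j hij => Nat.add_lt_add_left hij j0
  have hy1 := hy.comp hj0s
  set y1 : ℕ → X := fun j => y (j0 + j) with hy1def
  have hpos : ∀ j, 0 < ‖y1 j‖ := fun j => lt_trans (by norm_num) (hj0 (j0 + j) (by omega))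
  obtain ⟨⟨p, q, hpq1, hpq2, hpq3⟩, hyn, hyw⟩ := hy1
  let z : ℕ → X := fun j => ‖y1 j‖⁻¹ • y1 j
  have hz1 : ∀ j, ‖z j‖ = 1 := by
    intro j
    simp only [z, norm_smul, norm_inv, norm_norm]
    exact inv_mul_cancel₀ (hpos j).ne'
  have hzw : WeaklyNull z := by
    intro f
    have h1 := (hyn.inv₀ one_ne_zero).mul (hyw f)
    simpa [z] using h1
  obtain ⟨φ, hφ, E, i1, i2, i3, e, he⟩ := aux_spreading z 1 (fun j => (hz1 j).le)
  have he1 : ‖e 0 - e 1‖ = 1 := by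
    refine hsm E (fun j => z (φ j)) e ?_ (fun j => hz1 _) (fun f => (hzw f).comp hφ.tendsto_atTop) he
    have hspan : ∀ j, ∃ c : ℕ → ℝ, z (φ j) = ∑ i ∈ Finset.Icc (p (φ j)) (q (φ j)), c i • x i := by
      intro j
      have h1 : z (φ j) ∈ Submodule.span ℝ (x '' (Finset.Icc (p (φ j)) (q (φ j)) : Finset ℕ)) :=
        Submodule.smul_mem _ _ (hpq1 _)
      obtain ⟨c, hc⟩ := (Submodule.mem_span_image_finset_iff_exists_fun' ℝ).1 h1
      exact ⟨c, hc.symm⟩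
    choose c hc using hspan
    refine ⟨c, fun j => p (φ j), fun j => q (φ j), hc, ?_, fun j => hpq2 _, fun j => ?_⟩
    · intro j h0
      have := hz1 (φ j)
      rw [show z (φ j) = 0 from h0, norm_zero] at this
      exact zero_ne_one this
    · exact aux_blk_lt hpq2 hpq3 (hφ (Nat.lt_succ_self j))
  refine ⟨fun j => j0 + φ j, hj0s.comp hφ, ⟨fun j => p (φ (2 * j)), fun j => q (φ (2 * j + 1)), ?_, ?_, ?_⟩, ?_, ?_⟩
  · intro j
    have hlt := aux_blk_lt hpq2 hpq3 (hφ (show 2 * j < 2 * j + 1 by omega))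
    have ha := hpq2 (φ (2 * j))
    have hb := hpq2 (φ (2 * j + 1))
    show _ ∈ Submodule.span ℝ (x '' (Finset.Icc (p (φ (2 * j))) (q (φ (2 * j + 1))) : Finset ℕ))
    refine Submodule.sub_mem _ ?_ ?_
    · refine Submodule.span_mono (Set.image_mono ?_) (hpq1 (φ (2 * j)))
      exact Finset.coe_subset.2 (Finset.Icc_subset_Icc le_rfl (by omega))
    · refine Submodule.span_mono (Set.image_mono ?_) (hpq1 (φ (2 * j + 1)))
      exact Finset.coe_subset.2 (Finset.Icc_subset_Icc (by omega) le_rfl)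
  · intro j
    have hlt := aux_blk_lt hpq2 hpq3 (hφ (show 2 * j < 2 * j + 1 by omega))
    have ha := hpq2 (φ (2 * j))
    have hb := hpq2 (φ (2 * j + 1))
    show p (φ (2 * j)) ≤ q (φ (2 * j + 1))
    omega
  · intro j
    exact aux_blk_lt hpq2 hpq3 (hφ (show 2 * j + 1 < 2 * (j + 1) by omega))
  · have hd : Tendsto (fun j => ‖y1 j - z j‖) atTop (𝓝 0) := by
      have h1 : Tendsto (fun j => |1 - ‖y1 j‖⁻¹| * ‖y1 j‖) atTop (𝓝 (|1 - 1⁻¹| * 1)) :=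
        ((tendsto_const_nhds.sub (hyn.inv₀ one_ne_zero)).abs).mul hyn
      simp only [inv_one, sub_self, abs_zero, zero_mul] at h1
      refine h1.congr fun j => ?_
      rw [← Real.norm_eq_abs, ← norm_smul, sub_smul, one_smul]
    obtain ⟨ε, _, hε0, hε⟩ := he
    have h2j : Tendsto (fun j : ℕ => 2 * j) atTop atTop :=
      tendsto_atTop_mono (fun j => by simp only [id]; omega) tendsto_id
    have h2j1 : Tendsto (fun j : ℕ => 2 * j + 1) atTop atTop :=
      tendsto_atTop_mono (fun j => by simp only [id]; omega) tendsto_id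
    have hlim : Tendsto (fun j => ε (2 * j) + (‖y1 (φ (2 * j)) - z (φ (2 * j))‖ +
        ‖y1 (φ (2 * j + 1)) - z (φ (2 * j + 1))‖)) atTop (𝓝 0) := by
      have := (hε0.comp h2j).add ((hd.comp (hφ.tendsto_atTop.comp h2j)).add
        (hd.comp (hφ.tendsto_atTop.comp h2j1)))
      simpa using this
    rw [tendsto_iff_norm_sub_tendsto_zero]
    refine squeeze_zero' (Eventually.of_forall fun j => norm_nonneg _) ?_ hlim
    filter_upwards [eventually_ge_atTop 1] with j hj
    have hz := hε (2 * j) (fun i => if i = 0 then (1:ℝ) else if i = 1 then -1 else 0) (by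
      intro i _
      split_ifs <;> simp) (fun i => 2 * j + i) (fun a b hab => Nat.add_lt_add_left hab _) le_rfl
    obtain ⟨m, hm⟩ : ∃ m, 2 * j = m + 2 := ⟨2 * j - 2, by omega⟩
    rw [show Finset.range (2 * j) = Finset.range (m + 2) by rw [hm]] at hz
    rw [aux_sum_two m e, aux_sum_two m (fun i => z (φ (2 * j + i))), he1] at hz
    simp only [add_zero] at hz
    rw [Real.norm_eq_abs]
    show |‖y1 (φ (2 * j)) - y1 (φ (2 * j + 1))‖ - 1| ≤ _
    have h3 : |‖y1 (φ (2 * j)) - y1 (φ (2 * j + 1))‖ - ‖z (φ (2 * j)) - z (φ (2 * j + 1))‖| ≤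
        ‖y1 (φ (2 * j)) - z (φ (2 * j))‖ + ‖y1 (φ (2 * j + 1)) - z (φ (2 * j + 1))‖ := by
      refine (abs_norm_sub_norm_le _ _).trans ?_
      refine le_trans (le_of_eq ?_) (norm_sub_le _ _)
      congr 1; abel
    have h4 := abs_le.1 h3
    have h5 := abs_le.1 hz
    rw [abs_le]
    constructor <;> linarith
  · intro f
    have h2j : Tendsto (fun j : ℕ => 2 * j) atTop atTop :=
      tendsto_atTop_mono (fun j => by simp only [id]; omega) tendsto_id
    have h2j1 : Tendsto (fun j : ℕ => 2 * j + 1) atTop atTop :=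
      tendsto_atTop_mono (fun j => by simp only [id]; omega) tendsto_id
    have := ((hyw f).comp (hφ.tendsto_atTop.comp h2j)).sub ((hyw f).comp (hφ.tendsto_atTop.comp h2j1))
    simpa [hy1def] using this

lemma aux_sum_pairs {X : Type} [AddCommGroup X] (n : ℕ) (f : ℕ → X) :
    ∑ i ∈ Finset.range (2 * n), f i = ∑ i ∈ Finset.range n, (f (2 * i) + f (2 * i + 1)) := by
  induction n with
  | zero => simp
  | succ n ih =>
    rw [show 2 * (n + 1) = 2 * n + 1 + 1 by ring, Finset.sum_range_succ, Finset.sum_range_succ, ih,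
      Finset.sum_range_succ]
    abel

lemma aux_signs (x : ℕ → X)
    (hsm : ∀ (E : Type) [NormedAddCommGroup E] [NormedSpace ℝ E] [CompleteSpace E],
      ∀ (y : ℕ → X) (e : ℕ → E), IsBlockBasis x y → (∀ j, ‖y j‖ = 1) → WeaklyNull y →
        IsSpreadingModel y e → ‖e 0 - e 1‖ = 1) (m : ℕ) :
    ∃ σ : ℕ → ℝ, (∀ i, σ i = 1 ∨ σ i = -1) ∧ (0 < m → ∀ i, σ (2 * i + 1) = - σ (2 * i)) ∧
      ∀ y, auxGood x y → ∀ ε : ℝ, 0 < ε → ∃ k : ℕ → ℕ, StrictMono k ∧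
        ‖∑ i ∈ Finset.range (2 ^ m), σ i • y (k i)‖ ≤ 1 + ε := by
  induction m with
  | zero =>
    refine ⟨fun _ => 1, fun _ => Or.inl rfl, fun h => absurd h (lt_irrefl _), ?_⟩
    intro y hy ε hε
    obtain ⟨j0, hj0⟩ := (hy.2.1.eventually (gt_mem_nhds (show (1 : ℝ) < 1 + ε by linarith))).exists
    refine ⟨fun i => j0 + i, fun a b hab => Nat.add_lt_add_left hab _, ?_⟩
    simpa using hj0.le
  | succ m ih =>
    obtain ⟨σ, hσ, _, h⟩ := ih
    refine ⟨fun i => if i % 2 = 0 then σ (i / 2) else - σ (i / 2), ?_, ?_, ?_⟩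
    · intro i
      dsimp only
      split_ifs
      · exact hσ _
      · rcases hσ (i / 2) with h | h <;> rw [h] <;> simp
    · intro _ i
      have e1 : (2 * i + 1) % 2 = 1 := by omega
      have e2 : (2 * i) % 2 = 0 := by omega
      have e3 : (2 * i + 1) / 2 = i := by omega
      have e4 : (2 * i) / 2 = i := by omega
      simp only [e1, e2, e3, e4]
      simp
    · intro y hy ε hε
      obtain ⟨φ, hφ, hg⟩ := aux_diff x hsm y hy
      obtain ⟨k, hk, hle⟩ := h _ hg ε hε
      refine ⟨fun i => φ (2 * k (i / 2) + i % 2), ?_, ?_⟩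
      · refine strictMono_nat_of_lt_succ fun i => hφ ?_
        rcases Nat.mod_two_eq_zero_or_one i with h0 | h0
        · have e1 : (i + 1) % 2 = 1 := by omega
          have e2 : (i + 1) / 2 = i / 2 := by omega
          rw [e1, e2, h0]; omega
        · have e1 : (i + 1) % 2 = 0 := by omega
          have e2 : (i + 1) / 2 = i / 2 + 1 := by omega
          have := hk (Nat.lt_succ_self (i / 2))
          rw [e1, e2, h0]
          simp only [Nat.succ_eq_add_one] at this
          omega
      · refine le_trans (le_of_eq ?_) hle
        rw [pow_succ, mul_comm, aux_sum_pairs]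
        congr 1
        refine Finset.sum_congr rfl fun i _ => ?_
        have e1 : (2 * i + 1) % 2 = 1 := by omega
        have e2 : (2 * i) % 2 = 0 := by omega
        have e3 : (2 * i + 1) / 2 = i := by omega
        have e4 : (2 * i) / 2 = i := by omega
        simp only [e1, e2, e3, e4]
        simp [sub_eq_add_neg]

lemma aux_plus (x : ℕ → X)
    (hsm : ∀ (E : Type) [NormedAddCommGroup E] [NormedSpace ℝ E] [CompleteSpace E],
      ∀ (y : ℕ → X) (e : ℕ → E), IsBlockBasis x y → (∀ j, ‖y j‖ = 1) → WeaklyNull y →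
        IsSpreadingModel y e → ‖e 0 - e 1‖ = 1) (y : ℕ → X) (hy : auxGood x y) (n : ℕ)
    (ε : ℝ) (hε : 0 < ε) :
    ∃ τ : ℕ → ℕ, StrictMono τ ∧ ‖∑ i ∈ Finset.range n, y (τ i)‖ ≤ 1 + ε := by
  classical
  obtain ⟨σ, hσ, hσ2, h⟩ := aux_signs x hsm (n + 1)
  replace hσ2 := hσ2 (Nat.succ_pos n)
  set K := 2 ^ (n + 1) with hK
  obtain ⟨B, _, hBi, hB⟩ := aux_ramsey K
    (fun k => ‖∑ i ∈ Finset.range K, σ i • y (k i)‖ ≤ 1 + ε / 2) (by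
      intro k k' hkk' h
      have : ∑ i ∈ Finset.range K, σ i • y (k i) = ∑ i ∈ Finset.range K, σ i • y (k' i) :=
        Finset.sum_congr rfl (fun i hi => by rw [hkk' i (Finset.mem_range.1 hi)])
      rwa [this] at h) Set.univ Set.infinite_univ
  have hφ : StrictMono (Nat.nth (· ∈ B)) := Nat.nth_strictMono (p := (· ∈ B)) hBi
  have hφB : ∀ i, Nat.nth (· ∈ B) i ∈ B := fun i => Nat.nth_mem_of_infinite (p := (· ∈ B)) hBi i
  set φ := Nat.nth (· ∈ B)
  have hw := hy.comp hφ
  rcases hB with hB | hB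
  · obtain ⟨u, hu, hS⟩ := aux_suppress (fun j => y (φ j)) hw.2.2 K σ
      (fun i => by rcases hσ i with h | h <;> rw [h] <;> simp) (1 + ε / 2)
      (fun k hk => hB (fun i => φ (k i)) (hφ.comp hk) (fun i => hφB _)) (ε / 2 / K) (by positivity)
    let τ : ℕ → ℕ := fun j => 2 * j + (if σ (2 * j) = 1 then 0 else 1)
    have hτ : StrictMono τ := by
      refine strictMono_nat_of_lt_succ fun i => ?_
      simp only [τ]
      split_ifs <;> omega
    have hστ : ∀ j, σ (τ j) = 1 := by
      intro j
      by_cases h1 : σ (2 * j) = 1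
      · simp [τ, h1]
      · have h2 := (hσ (2 * j)).resolve_left h1
        simp only [τ, if_neg h1]
        rw [hσ2, h2, neg_neg]
    have hKn : 2 * n ≤ K := by
      have := Nat.lt_two_pow_self (n := n)
      rw [hK, pow_succ]; omega
    refine ⟨fun i => φ (u (τ i)), hφ.comp (hu.comp hτ), ?_⟩
    have := hS ((Finset.range n).image τ) (by
      intro a ha
      obtain ⟨j, hj, rfl⟩ := Finset.mem_image.1 ha
      have := Finset.mem_range.1 hj
      rw [Finset.mem_range]
      have : τ j ≤ 2 * j + 1 := by simp only [τ]; split_ifs <;> omega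
      omega)
    rw [Finset.sum_image (fun a _ b _ hab => hτ.injective hab)] at this
    simp only [hστ, one_smul] at this
    refine this.trans ?_
    have hK0 : (K : ℝ) ≠ 0 := by positivity
    rw [mul_div_cancel₀ _ hK0]
    linarith
  · exfalso
    obtain ⟨k, hk, hle⟩ := h _ hw (ε / 2) (by positivity)
    exact hB (fun i => φ (k i)) (hφ.comp hk) (fun i => hφB _) hle

end


lemma aux_init_unique (𝓕 : Set (Finset ℕ)) (hthin : IsThinFamily 𝓕) (L : Set ℕ) (F F' : Finset ℕ)
    (hF : F ∈ 𝓕) (hF' : F' ∈ 𝓕) (h : IsInitialSegmentOfSet F L) (h' : IsInitialSegmentOfSet F' L) :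
    F = F' := by
  obtain ⟨m, hm⟩ := h
  obtain ⟨m', hm'⟩ := h'
  rcases le_total m m' with hle | hle
  · refine hthin F hF F' hF' ⟨m, ?_⟩
    ext a
    rw [Finset.mem_filter, hm, hm']
    constructor
    · rintro ⟨h1, h2⟩; exact ⟨⟨h1, h2.trans hle⟩, h2⟩
    · rintro ⟨⟨h1, _⟩, h2⟩; exact ⟨h1, h2⟩
  · refine (hthin F' hF' F hF ⟨m', ?_⟩).symm
    ext a
    rw [Finset.mem_filter, hm, hm']
    constructor
    · rintro ⟨h1, h2⟩; exact ⟨⟨h1, h2.trans hle⟩, h2⟩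
    · rintro ⟨⟨h1, _⟩, h2⟩; exact ⟨h1, h2⟩

lemma aux_chain (k : ℕ) (E : ℕ → Finset ℕ) (hne : ∀ i < k, (E i).Nonempty)
    (h : ∀ i, i + 1 < k → ∀ a ∈ E i, ∀ b ∈ E (i + 1), a < b) :
    ∀ i j, i < j → j < k → ∀ a ∈ E i, ∀ b ∈ E j, a < b := by
  intro i j hij
  induction j, hij using Nat.le_induction with
  | base => exact fun hk => h i hk
  | succ j hj ih =>
    intro hk a ha b hb
    obtain ⟨c, hc⟩ := hne j (by omega)
    exact (ih (by omega) a ha c hc).trans (h j hk c hc b hb)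

lemma aux_tuple_unique (𝓕 : Set (Finset ℕ)) (hthin : IsThinFamily 𝓕) (hne : ∀ F ∈ 𝓕, F.Nonempty)
    (L : Set ℕ) (k : ℕ) (E E' : ℕ → Finset ℕ) (hE : ∀ i < k, E i ∈ 𝓕) (hE' : ∀ i < k, E' i ∈ 𝓕)
    (hc : ∀ i j, i < j → j < k → ∀ a ∈ E i, ∀ b ∈ E j, a < b)
    (hc' : ∀ i j, i < j → j < k → ∀ a ∈ E' i, ∀ b ∈ E' j, a < b)
    (h : IsInitialSegmentOfSet ((Finset.range k).biUnion E) L)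
    (h' : IsInitialSegmentOfSet ((Finset.range k).biUnion E') L) :
    ∀ i < k, E i = E' i := by
  have key : ∀ (E : ℕ → Finset ℕ), (∀ i < k, E i ∈ 𝓕) →
      (∀ i j, i < j → j < k → ∀ a ∈ E i, ∀ b ∈ E j, a < b) →
      IsInitialSegmentOfSet ((Finset.range k).biUnion E) L → ∀ i < k,
      IsInitialSegmentOfSet (E i) {a | a ∈ L ∧ ∀ j < i, a ∉ E j} := by
    intro E hE hc h i hi
    obtain ⟨m, hm⟩ := h
    have hn := hne _ (hE i hi)
    refine ⟨(E i).max' hn, fun a => ?_⟩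
    constructor
    · intro ha
      refine ⟨⟨((hm a).1 (Finset.mem_biUnion.2 ⟨i, Finset.mem_range.2 hi, ha⟩)).1, ?_⟩,
        Finset.le_max' _ _ ha⟩
      intro j hj haj
      exact lt_irrefl _ (hc j i hj hi a haj a ha)
    · rintro ⟨⟨h1, h2⟩, h3⟩
      have hmax := (E i).max'_mem hn
      have := ((hm _).1 (Finset.mem_biUnion.2 ⟨i, Finset.mem_range.2 hi, hmax⟩)).2
      obtain ⟨j, hj, haj⟩ := Finset.mem_biUnion.1 ((hm a).2 ⟨h1, h3.trans this⟩)
      rw [Finset.mem_range] at hj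
      rcases lt_trichotomy j i with hji | hji | hji
      · exact absurd haj (h2 j hji)
      · exact hji ▸ haj
      · exact absurd (hc i j hji hj _ hmax a haj) (by omega)
  intro i
  induction i using Nat.strong_induction_on with
  | _ i ih =>
    intro hi
    have h1 := key E hE hc h i hi
    have h2 := key E' hE' hc' h' i hi
    have : {a | a ∈ L ∧ ∀ j < i, a ∉ E j} = {a | a ∈ L ∧ ∀ j < i, a ∉ E' j} := by
      ext a
      simp only [Set.mem_ofPred_eq]
      refine and_congr_right fun _ => forall_congr' fun j => forall_congr' fun hj => ?_
      rw [ih j hj (hj.trans hi)]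
    rw [this] at h1
    exact aux_init_unique 𝓕 hthin _ _ _ (hE i hi) (hE' i hi) h1 h2

lemma aux_exists (𝓕 : Set (Finset ℕ)) (hlarge : IsLargeIn 𝓕 Set.univ) (hne : ∀ F ∈ 𝓕, F.Nonempty)
    (L : Set ℕ) (hL : L.Infinite) :
    ∃ E : ℕ → Finset ℕ, (∀ i, E i ∈ 𝓕) ∧ (∀ i j, i < j → ∀ a ∈ E i, ∀ b ∈ E j, a < b) ∧
      ∀ k, 0 < k → IsInitialSegmentOfSet ((Finset.range k).biUnion E) L := by
  classical
  have step : ∀ n : ℕ, ∃ F ∈ 𝓕, ∃ m, ∀ a, a ∈ F ↔ (a ∈ L ∧ n ≤ a) ∧ a < m := by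
    intro n
    have hinf : (L ∩ Set.Ici n).Infinite := by
      rcases n with _ | n
      · simpa using hL
      · have := aux_inf_Ioi hL n
        refine this.mono ?_
        rintro a ⟨h1, h2⟩
        exact ⟨h1, h2⟩
    obtain ⟨F, hF, m, hm⟩ := hlarge (L ∩ Set.Ici n) (Set.subset_univ _) hinf
    refine ⟨F, hF, m + 1, fun a => ?_⟩
    rw [hm, Nat.lt_succ_iff]; rfl
  choose F hF m hm using step
  have hlt : ∀ n, n < m n := by
    intro n
    obtain ⟨a, ha⟩ := hne _ (hF n)
    have := (hm n a).1 ha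
    omega
  let t : ℕ → ℕ := fun i => m^[i] 0
  have ht : ∀ i, t (i+1) = m (t i) := fun i => Function.iterate_succ_apply' m i 0
  have hts : StrictMono t := strictMono_nat_of_lt_succ fun i => by rw [ht]; exact hlt _
  have hmem : ∀ i a, a ∈ F (t i) ↔ (a ∈ L ∧ t i ≤ a) ∧ a < t (i+1) := by
    intro i a; rw [hm, ht]
  have hun : ∀ k a, a ∈ (Finset.range k).biUnion (fun i => F (t i)) ↔ a ∈ L ∧ a < t k := by
    intro k
    induction k with
    | zero => intro a; simp [t]
    | succ k ih =>
      intro a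
      rw [Finset.range_add_one, Finset.biUnion_insert, Finset.mem_union, ih, hmem]
      have := hts (Nat.lt_succ_self k)
      constructor
      · rintro (⟨⟨h1, h2⟩, h3⟩ | ⟨h1, h2⟩)
        · exact ⟨h1, h3⟩
        · exact ⟨h1, h2.trans this⟩
      · rintro ⟨h1, h2⟩
        by_cases h : a < t k
        · exact Or.inr ⟨h1, h⟩
        · exact Or.inl ⟨⟨h1, by omega⟩, h2⟩
  refine ⟨fun i => F (t i), fun i => hF _, ?_, ?_⟩
  · intro i j hij a ha b hb
    have h1 := (hmem i a).1 ha
    have h2 := (hmem j b).1 hb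
    have h3 := hts.monotone (show i + 1 ≤ j from hij)
    omega
  · intro k hk
    have h0 : 0 < t k := by
      have := hts hk
      omega
    refine ⟨t k - 1, fun a => ?_⟩
    rw [hun]
    constructor
    · rintro ⟨h1, h2⟩; exact ⟨h1, by omega⟩
    · rintro ⟨h1, h2⟩; exact ⟨h1, by omega⟩

section
variable {X : Type} [NormedAddCommGroup X] [NormedSpace ℝ X]

lemma aux_low (x : ℕ → X) (hnorm : ∀ i, ‖x i‖ = 1) (hwn : WeaklyNull x) :
    ∃ M0 : Set ℕ, M0.Infinite ∧ ∀ E : Finset ℕ, ↑E ⊆ M0 → ∀ i ∈ E, (∀ a ∈ E, i ≤ a) →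
      1 - 2 * (1/2 : ℝ)^i ≤ ‖∑ n ∈ E, x n‖ := by
  classical
  have hex : ∀ i, ∃ f : X →L[ℝ] ℝ, ‖f‖ = 1 ∧ f (x i) = 1 := by
    intro i
    obtain ⟨f, h1, h2⟩ := exists_dual_vector ℝ (x i) (by
      rw [hnorm]; exact one_ne_zero)
    refine ⟨f, h1, ?_⟩
    rw [h2, hnorm]; simp
  choose f hf1 hf2 using hex
  obtain ⟨B, -, hBi, hB⟩ := aux_diag (fun m A => ∀ n ∈ A, ∀ i ≤ m, |f i (x n)| ≤ (1/2 : ℝ)^m)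
    Set.univ Set.infinite_univ (fun m A B hBA h n hn => h n (hBA hn)) (by
      intro m A _ hA
      have hev : ∀ᶠ n in atTop, ∀ i ∈ Finset.range (m+1), |f i (x n)| ≤ (1/2 : ℝ)^m := by
        rw [Filter.eventually_all_finset]
        intro i _
        have := (hwn (f i)).abs
        rw [abs_zero] at this
        exact (this.eventually (gt_mem_nhds (show (0:ℝ) < (1/2)^m by positivity))).mono
          fun _ h => h.le
      obtain ⟨n0, hn0⟩ := eventually_atTop.1 hev
      refine ⟨A ∩ Set.Ioi n0, Set.inter_subset_left, aux_inf_Ioi hA n0, ?_⟩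
      intro n hn i hi
      exact hn0 n (le_of_lt hn.2) i (Finset.mem_range.2 (by omega)))
  refine ⟨B, hBi, ?_⟩
  have hsum : ∀ i ∈ B, ∀ S : Finset ℕ, (↑S ⊆ B ∧ ∀ a ∈ S, i < a) → ∃ m ∈ insert i S,
      (∀ a ∈ S, a ≤ m) ∧ i ≤ m ∧ ∑ n ∈ S, |f i (x n)| ≤ 2 * (1/2 : ℝ)^i - 2 * (1/2 : ℝ)^m := by
    intro i hi S
    induction S using Finset.induction_on_max with
    | empty => intro _; exact ⟨i, by simp, by simp, le_rfl, by simp⟩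
    | insert b S hb ih =>
      rintro ⟨h1, h2⟩
      obtain ⟨m, hm, hm1, hm2, hm3⟩ := ih ⟨fun a ha => h1 (by simp at ha; simp [ha]),
        fun a ha => h2 a (by simp [ha])⟩
      have hbS : b ∉ S := fun h => lt_irrefl _ (hb b h)
      have hbi : i < b := h2 b (by simp)
      have hmb : m < b := by
        rcases Finset.mem_insert.1 hm with rfl | h
        · exact hbi
        · exact hb m h
      have hmB : m ∈ B := by
        rcases Finset.mem_insert.1 hm with rfl | h
        · exact hi
        · exact h1 (by simp [h])
      refine ⟨b, by simp, ?_, hbi.le, ?_⟩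
      · intro a ha
        rcases Finset.mem_insert.1 ha with rfl | h
        · exact le_rfl
        · exact (hb a h).le
      · rw [Finset.sum_insert hbS]
        have hbd := hB m hmB b ⟨h1 (by simp), hmb⟩ i hm2
        have hp : (1/2 : ℝ)^b ≤ (1/2 : ℝ)^(m+1) :=
          pow_le_pow_of_le_one (by norm_num) (by norm_num) hmb
        rw [pow_succ] at hp
        linarith
  intro E hE i hi hmin
  obtain ⟨m, -, -, -, hm⟩ := hsum i (hE hi) (E.erase i) ⟨fun a ha => hE (Finset.mem_of_mem_erase (Finset.mem_coe.1 ha)), by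
    intro a ha
    rw [Finset.mem_erase] at ha
    exact lt_of_le_of_ne (hmin a ha.2) (Ne.symm ha.1)⟩
  have h1 : f i (∑ n ∈ E, x n) = 1 + ∑ n ∈ E.erase i, f i (x n) := by
    rw [map_sum, ← Finset.add_sum_erase E _ hi, hf2]
  have h2 := Finset.abs_sum_le_sum_abs (fun n => f i (x n)) (E.erase i)
  have h3 := (f i).le_opNorm (∑ n ∈ E, x n)
  rw [hf1, one_mul, Real.norm_eq_abs, h1] at h3
  have h4 := le_abs_self (1 + ∑ n ∈ E.erase i, f i (x n))
  have h5 := (abs_le.1 (h2.trans hm)).1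
  have h6 : (0:ℝ) ≤ 2 * (1/2)^m := by positivity
  linarith

end

section
variable {X : Type} [NormedAddCommGroup X] [NormedSpace ℝ X]

lemma aux_upper (x : ℕ → X)
    (hsm : ∀ (E : Type) [NormedAddCommGroup E] [NormedSpace ℝ E] [CompleteSpace E],
      ∀ (y : ℕ → X) (e : ℕ → E), IsBlockBasis x y → (∀ j, ‖y j‖ = 1) → WeaklyNull y →
        IsSpreadingModel y e → ‖e 0 - e 1‖ = 1)
    (𝓕 : Set (Finset ℕ)) (hthin : IsThinFamily 𝓕) (hlarge : IsLargeIn 𝓕 Set.univ)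
    (hweaknull : ∀ E : ℕ → Finset ℕ, (∀ n, E n ∈ 𝓕) →
      (∀ n, ∀ a ∈ E n, ∀ b ∈ E (n + 1), a < b) →
      WeaklyNull (fun n => ∑ i ∈ E n, x i))
    (hsup : TailSupNormOne x 𝓕) (hne : ∀ F ∈ 𝓕, F.Nonempty)
    (M0 : Set ℕ) (hlow : ∀ E : Finset ℕ, ↑E ⊆ M0 → ∀ i ∈ E, (∀ a ∈ E, i ≤ a) →
      1 - 2 * (1/2 : ℝ)^i ≤ ‖∑ n ∈ E, x n‖)
    (k : ℕ) (hk : 0 < k) (ε : ℝ) (hε : 0 < ε) (M : Set ℕ) (hM : M ⊆ M0) (hMi : M.Infinite) :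
    ∃ B ⊆ M, B.Infinite ∧ ∀ E : ℕ → Finset ℕ, (∀ i < k, E i ∈ 𝓕 ∧ ↑(E i) ⊆ B) →
      (∀ i j, i < j → j < k → ∀ a ∈ E i, ∀ b ∈ E j, a < b) →
      ‖∑ i ∈ Finset.range k, ∑ n ∈ E i, x n‖ ≤ 1 + ε := by
  classical
  obtain ⟨B, hBM, hBi, hB⟩ := aux_galvin (fun L => ∃ E : ℕ → Finset ℕ, (∀ i < k, E i ∈ 𝓕) ∧
    (∀ i j, i < j → j < k → ∀ a ∈ E i, ∀ b ∈ E j, a < b) ∧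
    IsInitialSegmentOfSet ((Finset.range k).biUnion E) L ∧
    1 + ε < ‖∑ i ∈ Finset.range k, ∑ n ∈ E i, x n‖) (by
      rintro L hL ⟨E, h1, h2, ⟨m, hm⟩, h4⟩
      refine ⟨m, fun L' hL' hag => ⟨E, h1, h2, ⟨m, fun a => ?_⟩, h4⟩⟩
      rw [hm]
      constructor
      · rintro ⟨h5, h6⟩; exact ⟨(hag a h6).2 h5, h6⟩
      · rintro ⟨h5, h6⟩; exact ⟨(hag a h6).1 h5, h6⟩) M hMi
  refine ⟨B, hBM, hBi, ?_⟩
  rcases hB with hB | hB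
  · exfalso
    obtain ⟨E, hE, hc, hinit⟩ := aux_exists 𝓕 hlarge hne B hBi
    have hEB : ∀ i, ↑(E i) ⊆ B := by
      intro i a ha
      obtain ⟨m, hm⟩ := hinit (i+1) (Nat.succ_pos i)
      exact ((hm a).1 (Finset.mem_biUnion.2 ⟨i, by simp, ha⟩)).1
    have hmn : ∀ i, (E i).Nonempty := fun i => hne _ (hE i)
    have hmm : StrictMono fun i => (E i).min' (hmn i) :=
      strictMono_nat_of_lt_succ fun i => hc i (i+1) (Nat.lt_succ_self i) _ (Finset.min'_mem _ _) _
        (Finset.min'_mem _ _)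
    have hgood : auxGood x (fun j => ∑ n ∈ E j, x n) := by
      refine ⟨⟨fun j => (E j).min' (hmn j), fun j => (E j).max' (hmn j), ?_, ?_, ?_⟩, ?_, ?_⟩
      · intro j
        refine Submodule.sum_mem _ fun i hi => Submodule.subset_span ⟨i, ?_, rfl⟩
        rw [Finset.mem_coe, Finset.mem_Icc]
        exact ⟨Finset.min'_le _ _ hi, Finset.le_max' _ _ hi⟩
      · exact fun j => Finset.min'_le _ _ (Finset.max'_mem _ _)
      · exact fun j => hc j (j+1) (Nat.lt_succ_self j) _ (Finset.max'_mem _ _) _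
          (Finset.min'_mem _ _)
      · rw [Metric.tendsto_atTop]
        intro δ hδ
        obtain ⟨n1, hn1⟩ := hsup.1 (δ/2) (by linarith)
        have hpow : Tendsto (fun i : ℕ => 2 * (1/2 : ℝ)^i) atTop (𝓝 (2 * 0)) :=
          (tendsto_pow_atTop_nhds_zero_of_lt_one (by norm_num) (by norm_num)).const_mul 2
        rw [mul_zero] at hpow
        obtain ⟨n2, hn2⟩ := eventually_atTop.1 (hpow.eventually (gt_mem_nhds hδ))
        refine ⟨max n1 n2, fun j hj => ?_⟩
        have hj' : max n1 n2 ≤ (E j).min' (hmn j) := hj.trans (hmm.id_le j)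
        have u1 := hn1 (E j) (hE j) (fun i hi =>
          (le_max_left _ _).trans (hj'.trans (Finset.min'_le _ _ hi)))
        have u2 := hlow (E j) ((hEB j).trans (hBM.trans hM)) _ (Finset.min'_mem _ (hmn j))
          (fun a ha => Finset.min'_le _ _ ha)
        have u3 := hn2 _ ((le_max_right _ _).trans hj')
        rw [Real.dist_eq, abs_lt]
        constructor <;> linarith
      · exact hweaknull E hE fun n => hc n (n+1) (Nat.lt_succ_self n)
    obtain ⟨τ, hτ, hle⟩ := aux_plus x hsm _ hgood k ε hε
    have hLmem : ∀ a, a ∈ (⋃ j, (E (τ j) : Set ℕ)) ↔ ∃ j, a ∈ E (τ j) := by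
      intro a; simp
    have hLi : (⋃ j, (E (τ j) : Set ℕ)).Infinite := by
      refine Set.infinite_of_injective_forall_mem (f := fun j => (E (τ j)).min' (hmn _))
        (hmm.comp hτ).injective fun j => (hLmem _).2 ⟨j, Finset.min'_mem _ _⟩
    obtain ⟨E', h1, h2, h3, h4⟩ := hB _ (Set.iUnion_subset fun j => hEB (τ j)) hLi
    have huniq := aux_tuple_unique 𝓕 hthin hne _ k E' (fun i => E (τ i)) h1 (fun i _ => hE _) h2
      (fun i j hij _ => hc _ _ (hτ hij)) h3 (by
        refine ⟨(E (τ (k-1))).max' (hmn _), fun a => ?_⟩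
        rw [Finset.mem_biUnion, hLmem]
        constructor
        · rintro ⟨j, hj, ha⟩
          rw [Finset.mem_range] at hj
          refine ⟨⟨j, ha⟩, ?_⟩
          rcases Nat.lt_or_ge j (k-1) with hlt | hge
          · exact (hc _ _ (hτ hlt) a ha _ (Finset.max'_mem _ _)).le
          · obtain rfl : j = k-1 := by omega
            exact Finset.le_max' _ _ ha
        · rintro ⟨⟨j, ha⟩, hle'⟩
          refine ⟨j, ?_, ha⟩
          rw [Finset.mem_range]
          by_contra hcon
          have := hc _ _ (hτ (show k - 1 < j by omega)) _ (Finset.max'_mem _ (hmn _)) a ha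
          omega)
    have : ∑ i ∈ Finset.range k, ∑ n ∈ E' i, x n = ∑ i ∈ Finset.range k, ∑ n ∈ E (τ i), x n :=
      Finset.sum_congr rfl fun i hi => by rw [huniq i (Finset.mem_range.1 hi)]
    rw [this] at h4
    linarith
  · intro E hE hc
    by_contra hcon
    push Not at hcon
    set G := (Finset.range k).biUnion E with hG
    have hGB : ↑G ⊆ B := by
      intro a ha
      obtain ⟨i, hi, hai⟩ := Finset.mem_biUnion.1 (Finset.mem_coe.1 ha)
      exact (hE i (Finset.mem_range.1 hi)).2 hai
    refine hB (↑G ∪ (B ∩ Set.Ioi (G.sup id))) (Set.union_subset hGB Set.inter_subset_left)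
      ((aux_inf_Ioi hBi _).mono Set.subset_union_right)
      ⟨E, fun i hi => (hE i hi).1, hc, ⟨G.sup id, fun a => ?_⟩, hcon⟩
    rw [← hG]
    constructor
    · exact fun ha => ⟨Or.inl ha, Finset.le_sup (f := id) ha⟩
    · rintro ⟨ha | ha, hle⟩
      · exact ha
      · exact absurd hle (not_le.2 ha.2)

end

lemma aux_gmem (𝓕 : Set (Finset ℕ)) (N : ℕ → ℕ) (k : ℕ) (E : ℕ → Finset ℕ) (hk : 0 < k)
    (hc : ∀ i j, i < j → j < k → ∀ a ∈ E i, ∀ b ∈ E j, a < b)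
    (hmem : N (k - 1) ∈ E 0) (hmin : ∀ a ∈ E 0, N (k - 1) ≤ a) :
    N (k-1) ∈ (Finset.range k).biUnion E ∧ ∀ a ∈ (Finset.range k).biUnion E, N (k-1) ≤ a := by
  refine ⟨Finset.mem_biUnion.2 ⟨0, Finset.mem_range.2 hk, hmem⟩, fun a ha => ?_⟩
  obtain ⟨i, hi, hai⟩ := Finset.mem_biUnion.1 ha
  rcases Nat.eq_zero_or_pos i with rfl | hpos
  · exact hmin a hai
  · exact (hc 0 i hpos (Finset.mem_range.1 hi) _ hmem a hai).le

theorem induction_step_lemma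
    {X : Type} [NormedAddCommGroup X] [NormedSpace ℝ X] [CompleteSpace X]
    (x : ℕ → X) (hbasis : IsSchauderBasis x) (hnorm : ∀ i, ‖x i‖ = 1)
    (hwn : WeaklyNull x) (hl1 : ¬ Embeds ellOne X)
    (hsm : ∀ (E : Type) [NormedAddCommGroup E] [NormedSpace ℝ E] [CompleteSpace E],
      ∀ (y : ℕ → X) (e : ℕ → E), IsBlockBasis x y → (∀ j, ‖y j‖ = 1) → WeaklyNull y →
        IsSpreadingModel y e → ‖e 0 - e 1‖ = 1)
    (𝓕 : Set (Finset ℕ)) (hthin : IsThinFamily 𝓕) (hlarge : IsLargeIn 𝓕 Set.univ)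
    (hweaknull : ∀ E : ℕ → Finset ℕ, (∀ n, E n ∈ 𝓕) →
      (∀ n, ∀ a ∈ E n, ∀ b ∈ E (n + 1), a < b) →
      WeaklyNull (fun n => ∑ i ∈ E n, x i))
    (hsup : TailSupNormOne x 𝓕) :
    ∃ N : ℕ → ℕ, StrictMono N ∧
      IsThinFamily (GFamily 𝓕 N) ∧
      IsLargeIn (GFamily 𝓕 N) (Set.range N) ∧
      TailSupNormOne x (GFamily 𝓕 N) := by
  classical
  have hne : ∀ F ∈ 𝓕, F.Nonempty := by
    intro F hF
    rw [Finset.nonempty_iff_ne_empty]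
    rintro rfl
    obtain ⟨E, hE, h1, h2⟩ := hsup.2 (1/2) (by norm_num) 1
    have : ∅ = E := hthin ∅ hF E hE ⟨0, by
      symm
      rw [Finset.filter_eq_empty_iff]
      intro a ha
      have := h1 a ha
      omega⟩
    rw [← this, Finset.sum_empty, norm_zero] at h2
    norm_num at h2
  obtain ⟨M0, hM0i, hlow⟩ := aux_low x hnorm hwn
  let Q : ℕ → Set ℕ → Prop := fun k B => 0 < k → ∀ E : ℕ → Finset ℕ,
      (∀ i < k, E i ∈ 𝓕 ∧ ↑(E i) ⊆ B) →
      (∀ i j, i < j → j < k → ∀ a ∈ E i, ∀ b ∈ E j, a < b) →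
      ‖∑ i ∈ Finset.range k, ∑ n ∈ E i, x n‖ ≤ 1 + 1 / (k : ℝ)
  have hQh : ∀ k A B, B ⊆ A → Q k A → Q k B := by
    intro k A B hBA h hk E hE
    exact h hk E fun i hi => ⟨(hE i hi).1, (hE i hi).2.trans hBA⟩
  have hQd : ∀ k A, A ⊆ M0 → A.Infinite → ∃ B ⊆ A, B.Infinite ∧ Q k B := by
    intro k A hA hAi
    rcases Nat.eq_zero_or_pos k with rfl | hk
    · exact ⟨A, subset_rfl, hAi, fun h => absurd h (lt_irrefl 0)⟩
    · obtain ⟨B, h1, h2, h3⟩ := aux_upper x hsm 𝓕 hthin hlarge hweaknull hsup hne M0 hlow k hk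
        (1 / (k : ℝ)) (by positivity) A hA hAi
      exact ⟨B, h1, h2, fun _ => h3⟩
  obtain ⟨B, hBM, hBi, hB⟩ := aux_diag (fun m A => ∀ j ∈ Set.Iic (m+2), Q j A) M0 hM0i
    (fun m A B hBA h j hj => hQh j A B hBA (h j hj))
    (fun m A hA hAi => aux_fin Q M0 hQh hQd (Set.Iic (m+2)) (Set.finite_Iic _) A hA hAi)
  let N : ℕ → ℕ := Nat.nth (· ∈ B)
  have hN : StrictMono N := Nat.nth_strictMono (p := (· ∈ B)) hBi
  have hNr : Set.range N = B := Nat.range_nth_of_infinite (p := (· ∈ B)) hBi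
  have hNB : ∀ i, N i ∈ B := fun i => hNr ▸ Set.mem_range_self i
  have hlargeG : IsLargeIn (GFamily 𝓕 N) (Set.range N) := by
    intro L hL hLi
    obtain ⟨E, hE, hc, hinit⟩ := aux_exists 𝓕 hlarge hne L hLi
    have hmem := Nat.sInf_mem hLi.nonempty
    obtain ⟨j, hj⟩ := hL hmem
    have hEL : ∀ i, ↑(E i) ⊆ L := by
      intro i a ha
      obtain ⟨m, hm⟩ := hinit (i+1) (Nat.succ_pos i)
      exact ((hm a).1 (Finset.mem_biUnion.2 ⟨i, by simp, ha⟩)).1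
    refine ⟨(Finset.range (j+1)).biUnion E, ⟨j+1, E, Nat.succ_pos j,
      fun i _ => ⟨hE i, hne _ (hE i), (hEL i).trans hL⟩,
      fun i _ => hc i (i+1) (Nat.lt_succ_self i), ?_, ?_, rfl⟩, hinit _ (Nat.succ_pos j)⟩
    · rw [Nat.add_sub_cancel, hj]
      obtain ⟨a, ha⟩ := hne _ (hE 0)
      obtain ⟨m, hm⟩ := hinit 1 one_pos
      simp only [Finset.range_one, Finset.singleton_biUnion] at hm
      exact (hm _).2 ⟨hmem, (Nat.sInf_le (hEL 0 ha)).trans ((hm a).1 ha).2⟩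
    · intro a ha
      rw [Nat.add_sub_cancel, hj]
      exact Nat.sInf_le (hEL 0 ha)
  refine ⟨N, hN, ?_, hlargeG, ?_, ?_⟩
  · rintro G ⟨k, E, hk, hE, hc0, hm, hmin, hG⟩ G' ⟨k', E', hk', hE', hc0', hm', hmin', hG'⟩ ⟨m, hGG⟩
    have hc := aux_chain k E (fun i hi => (hE i hi).2.1) hc0
    have hc' := aux_chain k' E' (fun i hi => (hE' i hi).2.1) hc0'
    obtain ⟨u1, u2⟩ := aux_gmem 𝓕 N k E hk hc hm hmin
    obtain ⟨u1', u2'⟩ := aux_gmem 𝓕 N k' E' hk' hc' hm' hmin'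
    rw [← hG] at u1 u2
    rw [← hG'] at u1' u2'
    have v1 : N (k-1) ∈ G' ∧ N (k-1) ≤ m := by rw [hGG, Finset.mem_filter] at u1; exact u1
    have v2 := u2' _ v1.1
    have v3 : N (k'-1) ∈ G := by rw [hGG, Finset.mem_filter]; exact ⟨u1', v2.trans v1.2⟩
    have v4 := hN.injective (le_antisymm (u2 _ v3) v2)
    obtain rfl : k = k' := by omega
    have huniq := aux_tuple_unique 𝓕 hthin hne (↑G') k E E' (fun i hi => (hE i hi).1)
      (fun i hi => (hE' i hi).1) hc hc' (by
        rw [← hG]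
        refine ⟨m, fun a => ?_⟩
        rw [hGG, Finset.mem_filter]; rfl) (by
        rw [← hG']
        refine ⟨G'.sup id, fun a => ?_⟩
        exact ⟨fun ha => ⟨ha, Finset.le_sup (f := id) ha⟩, fun ha => ha.1⟩)
    rw [hG, hG']
    ext a
    simp only [Finset.mem_biUnion, Finset.mem_range]
    constructor
    · rintro ⟨i, hi, ha⟩; exact ⟨i, hi, huniq i hi ▸ ha⟩
    · rintro ⟨i, hi, ha⟩; exact ⟨i, hi, (huniq i hi).symm ▸ ha⟩
  · intro ε hε
    obtain ⟨n0, hn0⟩ := exists_nat_one_div_lt hε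
    refine ⟨N (n0+1), ?_⟩
    rintro G ⟨k, E, hk, hE, hc0, hm, hmin, hG⟩ hmG
    have hc := aux_chain k E (fun i hi => (hE i hi).2.1) hc0
    obtain ⟨u1, u2⟩ := aux_gmem 𝓕 N k E hk hc hm hmin
    rw [← hG] at u1 u2
    have hk1 : n0 + 1 ≤ k - 1 := hN.le_iff_le.1 (hmG _ u1)
    have hlt : N (k-2) < N (k-1) := hN (by omega)
    have hidk : k - 2 ≤ N (k-2) := hN.id_le _
    have hb := hB (N (k-2)) (hNB _) k (by rw [Set.mem_Iic]; omega) hk E (by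
      intro i hi
      refine ⟨(hE i hi).1, fun a ha => ⟨hNr ▸ (hE i hi).2.2 ha, ?_⟩⟩
      have : a ∈ G := by rw [hG]; exact Finset.mem_biUnion.2 ⟨i, Finset.mem_range.2 hi, ha⟩
      exact lt_of_lt_of_le hlt (u2 a this)) hc
    rw [hG, Finset.sum_biUnion]
    · refine hb.trans ?_
      have : 1 / (k : ℝ) ≤ 1 / ((n0 : ℝ) + 1) := by
        apply one_div_le_one_div_of_le (by positivity)
        have : n0 + 1 ≤ k := by omega
        exact_mod_cast this
      linarith
    · intro i hi j hj hij
      rw [Finset.mem_coe, Finset.mem_range] at hi hj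
      change Disjoint (E i) (E j)
      rw [Finset.disjoint_left]
      intro a hai haj
      rcases lt_or_gt_of_ne hij with h | h
      · exact lt_irrefl _ (hc i j h hj a hai a haj)
      · exact lt_irrefl _ (hc j i h hi a haj a hai)
  · intro ε hε n
    have hpow : Tendsto (fun i : ℕ => 2 * (1/2 : ℝ)^i) atTop (𝓝 (2 * 0)) :=
      (tendsto_pow_atTop_nhds_zero_of_lt_one (by norm_num) (by norm_num)).const_mul 2
    rw [mul_zero] at hpow
    obtain ⟨n2, hn2⟩ := eventually_atTop.1 (hpow.eventually (gt_mem_nhds hε))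
    obtain ⟨G, hG, m, hGm⟩ := hlargeG (B ∩ Set.Ioi (max n n2)) (by rw [hNr]; exact Set.inter_subset_left)
      (aux_inf_Ioi hBi _)
    refine ⟨G, hG, fun i hi => ?_, ?_⟩
    · exact (le_max_left _ _).trans (le_of_lt ((hGm i).1 hi).1.2)
    · obtain ⟨k, E, hk, hE, hc0, hm, hmin, hG⟩ := hG
      have hc := aux_chain k E (fun i hi => (hE i hi).2.1) hc0
      obtain ⟨u1, u2⟩ := aux_gmem 𝓕 N k E hk hc hm hmin
      rw [← hG] at u1 u2
      have h1 := hlow G (fun a ha => hBM ((hGm a).1 ha).1.1) _ u1 u2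
      have h2 := hn2 (N (k-1)) ((le_max_right _ _).trans (le_of_lt ((hGm _).1 u1).1.2))
      linarith
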